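/- Let r,q ≥ 1 with rq > 1. Transport the connection digraph of σ_{rq} to labels: an edge from label u to label v means the edge of the connection digraph between their meander positions. Then there is an edge from u to v if and only if neither u nor v equals A^0_0 and the pair occurs in the following list: (vertical Chafee-Infante stacks, for each fixed 0 ≤ j ≤ r) A^j_{k+1} → A^j_k for 0 ≤ k ≤ q−1; A^j_{k+1} → B^j_{k−1} for 1 ≤ k ≤ q−1; B^j_k → A^j_k for 0 ≤ k ≤ q; B^j_k → B^j_{k−1} for 1 ≤ k ≤ q; (slanted Chafee-Infante stacks, for each fixed 0 ≤ k ≤ q) A^{j+1}_k → A^j_k for 0 ≤ j ≤ r−1; A^{j+1}_k → B^{j−1}_k for 1 ≤ j ≤ r−1; B^j_k → A^j_k for 0 ≤ j ≤ r; B^j_k → B^{j−1}_k for 1 ≤ j ≤ r. -/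

import Mathlib

/-- Morse numbers `i_j` of a permutation `σ` of `{1,…,N}` (extended to `ℕ`),
via the recursion `i_1 = 0`,
`i_{j+1} = i_j + (-1)^(j+1) * sign (σ⁻¹(j+1) - σ⁻¹(j))`. -/
def morse (σ : Equiv.Perm ℕ) : ℕ → ℤ
  | 0 => 0
  | 1 => 0
  | (j+2) => morse σ (j+1) +
      (-1)^(j+2) * Int.sign ((σ.symm (j+2) : ℤ) - (σ.symm (j+1) : ℤ))

/-- Zero numbers `z_{j k}`, recursion in the first index `j`, second index `k` fixed:
`z_{1k} = 0`, `z_{kk} = i_k`, `z_{k+1,k} = min (i_k, i_{k+1})`, and otherwise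
`z_{j+1,k} = z_{jk} + ((-1)^(j+1)/2) * (sign (σ⁻¹(j+1) - σ⁻¹(k)) - sign (σ⁻¹(j) - σ⁻¹(k)))`. -/
def zrec (σ : Equiv.Perm ℕ) (k : ℕ) : ℕ → ℤ
  | 0 => 0
  | 1 => 0
  | (j+2) =>
      if j+2 = k then morse σ k
      else if j+1 = k then min (morse σ k) (morse σ (k+1))
      else zrec σ k (j+1) +
        ((-1)^(j+2) * (Int.sign ((σ.symm (j+2) : ℤ) - (σ.symm k : ℤ))
          - Int.sign ((σ.symm (j+1) : ℤ) - (σ.symm k : ℤ)))) / 2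

/-- The zero number `z_{m n}`. -/
def zfun (σ : Equiv.Perm ℕ) (m n : ℕ) : ℤ := zrec σ n m

/-- The connection digraph of a dissipative Morse permutation `σ` of `{1,…,N}`:
an edge `m ⤳ n` iff `i_m = i_n + 1` and no `w` strictly between `m` and `n`
blocks, i.e. satisfies `z_{mw} = z_{wn} = z_{mn}`. -/
def hasEdge (N : ℕ) (σ : Equiv.Perm ℕ) (m n : ℕ) : Prop :=
  1 ≤ m ∧ m ≤ N ∧ 1 ≤ n ∧ n ≤ N ∧
  morse σ m = morse σ n + 1 ∧
  ¬ ∃ w : ℕ, min m n < w ∧ w < max m n ∧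
      zfun σ m w = zfun σ w n ∧ zfun σ w n = zfun σ m n

/-- A dissipative permutation of `{1,…,N}`. -/
def Dissipative (N : ℕ) (σ : Equiv.Perm ℕ) : Prop :=
  Set.BijOn σ (Set.Icc 1 N) (Set.Icc 1 N) ∧ σ 1 = 1 ∧ σ N = N

/-- The Morse property: all Morse numbers are nonnegative. -/
def MorseProp (N : ℕ) (σ : Equiv.Perm ℕ) : Prop :=
  ∀ j, 1 ≤ j → j ≤ N → 0 ≤ morse σ j

/-- Morse counts `μ(i) = #{j ∈ {1,…,N} : i_j = i}`. -/
def morseCount (N : ℕ) (σ : Equiv.Perm ℕ) (i : ℤ) : ℕ :=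
  ((Finset.Icc 1 N).filter (fun j => morse σ j = i)).card

/-- The primitive 3-nose permutation `σ_{rq}` of `{1,…,N}`, `N = 2(r+1)(q+1)-1`,
characterized by its defining relations, extended to a permutation of `ℕ`
fixing everything outside `{1,…,N}`. -/
def SigmaRQ (r q : ℕ) (σ : Equiv.Perm ℕ) : Prop :=
  (∀ a, a ∉ Set.Icc 1 (2*(r+1)*(q+1) - 1) → σ a = a) ∧
  (∀ j k, j ≤ r → k ≤ q →
    σ (2*((q+1)*j+k)+1) = 2*(j+(r+1)*k)+1) ∧
  (∀ j k, j ≤ r → k ≤ q → ¬(j = 0 ∧ k = 0) →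
    σ (2*((q+1)*(r-j)+(q-k)+1)) = 2*(j+(r+1)*k))

/-- Tags `A`, `B` of equilibrium labels `A^j_k`, `B^j_k`. -/
inductive Tag | A | B
deriving DecidableEq

/-- The axis position (`h_1`-position) of the label `L^j_k` for parameters `(r,q)`. -/
def axisPos (r q : ℕ) : Tag → ℕ → ℕ → ℕ
  | Tag.A, j, k => if Odd j then (q+1)*(j-1)+k+1 else (q+1)*(2*r+1-j)+(q-k)+1
  | Tag.B, j, k => if Odd j then (q+1)*j+(q-k)+1 else (q+1)*(2*r-j)+k+1

/-- The meander position (`h_0`-position) of the label `L^j_k` for parameters `(r,q)`. -/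
def meanderPos (r q : ℕ) : Tag → ℕ → ℕ → ℕ
  | Tag.A, j, k => if Odd k then (r+1)*(2*q+1-k)+(2*r+1-j) else (r+1)*k+j
  | Tag.B, j, k => if Odd k then (r+1)*(2*q+1-k)+j else (r+1)*(k+1)+(r-j)

/-- The suspension `σ̃` of a dissipative permutation `σ` of `{1,…,N}`:
`σ̃(1) = 1`, `σ̃(N+2) = N+2`, and `σ̃(a+1) = N+2 - σ(a)` for `1 ≤ a ≤ N`. -/
def IsSuspension (N : ℕ) (σ σt : Equiv.Perm ℕ) : Prop :=
  σt 1 = 1 ∧ σt (N+2) = N+2 ∧ ∀ a, 1 ≤ a → a ≤ N → σt (a+1) = N+2 - σ a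

/-- The label `A^0_0` is the distinguished (formal) vertex `⋆`. -/
def IsStar (L : Tag) (j k : ℕ) : Prop := L = Tag.A ∧ j = 0 ∧ k = 0

/-- Tag swap `A ↔ B`, used by the reversor. -/
def tagSwap : Tag → Tag
  | Tag.A => Tag.B
  | Tag.B => Tag.A

/-- The list of edges of the Chafee-Infante lattice `CIS^{rq} ∪ CIS_{rq}`:
vertical Chafee-Infante stacks (fixed `j`) and slanted ones (fixed `k`). -/
def EdgeSpec (r q : ℕ) (L : Tag) (j k : ℕ) (L' : Tag) (j' k' : ℕ) : Prop :=
  -- vertical stacks CIS^j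
  (L = Tag.A ∧ L' = Tag.A ∧ j = j' ∧ k = k'+1 ∧ k ≤ q) ∨
  (L = Tag.A ∧ L' = Tag.B ∧ j = j' ∧ k = k'+2 ∧ k ≤ q) ∨
  (L = Tag.B ∧ L' = Tag.A ∧ j = j' ∧ k = k') ∨
  (L = Tag.B ∧ L' = Tag.B ∧ j = j' ∧ k = k'+1 ∧ k ≤ q) ∨
  -- slanted stacks CIS_k
  (L = Tag.A ∧ L' = Tag.A ∧ k = k' ∧ j = j'+1 ∧ j ≤ r) ∨
  (L = Tag.A ∧ L' = Tag.B ∧ k = k' ∧ j = j'+2 ∧ j ≤ r) ∨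
  (L = Tag.B ∧ L' = Tag.B ∧ k = k' ∧ j = j'+1 ∧ j ≤ r)


/-!
Let `j` be the column and `k` the row of `A^j_k` and `B^j_k`. The meander visits the rows in the
order `0, 2, 4, …, 5, 3, 1` and traverses even rows as `A^0, …, A^r, B^r, …, B^0`, odd rows
backwards. So the relative position of two labels depends only on the parity of the lower row and on
one fixed lexicographic order. The axis is the reversed meander of the transposed labels.

Along the meander these orders turn the recursions for Morse and zero numbers into recursions on
labels, solved by `j + k - 1` (for `A`) and `j + k` (for `B`), and, for the zero numbers, by
`min j j' + min k k'` plus a correction in `{-1, 0, 1}`. In these terms, a pair whose Morse numbers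
drop by one and which is not a stack edge is either strictly crossing, `j < j'` and `k' < k` or the
reverse, and then blocked by `B` at the minimal row and column, or is `A^{j+1}_{k+1}`, `B^j_k`, and
then blocked by `B^{j+1}_{k+1}`. Between the ends of a stack edge the meander only meets the rows of
the ends and, if these are adjacent, the rows beyond; the zero numbers rule out a blocking label.
-/

/-- A label `A^j_k` or `B^j_k`, with `col = j` and `row = k`. -/
structure Label where
  tag : Tag
  /-- The superscript `j`, naming a vertical stack. -/
  col : ℕ
  /-- The subscript `k`, naming a slanted stack. -/
  row : ℕ

theorem mul_add_lt_mul_add_iff {n a b a' b' : ℕ} (hb : b < n) (hb' : b' < n) :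
    n * a + b < n * a' + b' ↔ a < a' ∨ a = a' ∧ b < b' := by
  rcases lt_trichotomy a a' with h | rfl | h
  · have := Nat.mul_le_mul_left n (Nat.succ_le_of_lt h)
    rw [Nat.mul_succ] at this
    omega
  · simp
  · have := Nat.mul_le_mul_left n (Nat.succ_le_of_lt h)
    rw [Nat.mul_succ] at this
    omega

/-- The rank of `i` in the enumeration `0, 2, 4, …, 5, 3, 1` of `{0, …, n}`, in which the rows occur
along the meander. -/
def zigzag (n i : ℕ) : ℕ := if Odd i then n - i / 2 else i / 2

theorem zigzag_two_mul (n i : ℕ) : zigzag n (2 * i) = i := by simp [zigzag]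

theorem zigzag_two_mul_add_one (n i : ℕ) : zigzag n (2 * i + 1) = n - i := by
  simp only [zigzag, odd_two_mul_add_one, if_true]; omega

theorem zigzag_le {n i : ℕ} (hi : i ≤ n) : zigzag n i ≤ n := by
  unfold zigzag; split_ifs <;> omega

theorem exists_zigzag_eq {n m : ℕ} (hm : m ≤ n) : ∃ i ≤ n, zigzag n i = m := by
  rcases Nat.lt_or_ge n (2 * m) with h | h
  · exact ⟨2 * (n - m) + 1, by omega, by rw [zigzag_two_mul_add_one]; omega⟩
  · exact ⟨2 * m, h, zigzag_two_mul n m⟩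

theorem zigzag_eq_zero_iff {n i : ℕ} (hi : i ≤ n) : zigzag n i = 0 ↔ i = 0 := by
  unfold zigzag; split_ifs with h <;> rw [Nat.odd_iff] at h <;> omega

theorem zigzag_inj {n i i' : ℕ} (hi : i ≤ n) (hi' : i' ≤ n) :
    zigzag n i = zigzag n i' ↔ i = i' := by
  unfold zigzag
  split_ifs with h h' h' <;> rw [Nat.odd_iff] at h h' <;> omega

theorem zigzag_lt_iff {n i i' : ℕ} (hi : i ≤ n) (hi' : i' ≤ n) :
    zigzag n i < zigzag n i' ↔ if Even (min i i') then i < i' else i' < i := by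
  grind [zigzag]

namespace Label

variable {r q : ℕ} {w x y z : Label}

/-- The labels with `j ≤ r` and `k ≤ q`, including the formal vertex `A^0_0`. -/
structure InGrid (r q : ℕ) (x : Label) : Prop where
  col_le : x.col ≤ r
  row_le : x.row ≤ q

/-- The labels of the equilibria: those of the grid, except `A^0_0`. -/
structure Admissible (r q : ℕ) (x : Label) : Prop extends x.InGrid r q where
  not_star : ¬ IsStar x.tag x.col x.row

/-- The meander position of a label. -/
def meander (r q : ℕ) (x : Label) : ℕ := meanderPos r q x.tag x.col x.row

/-- The axis position of a label. -/
def axis (r q : ℕ) (x : Label) : ℕ := axisPos r q x.tag x.col x.row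

/-- The reflection `A^j_k ↦ A^k_j`, `B^j_k ↦ B^k_j`, exchanging the two stack decompositions. -/
def transpose (x : Label) : Label := ⟨x.tag, x.row, x.col⟩

theorem InGrid.transpose (hx : x.InGrid r q) : x.transpose.InGrid q r := ⟨hx.row_le, hx.col_le⟩

theorem transpose_injective : Function.Injective transpose :=
  fun _ _ h => congrArg transpose h

/-- The position of a label within its row, counted along the meander. -/
def rowOffset (r : ℕ) (x : Label) : ℕ :=
  if x.tag = Tag.A ↔ Even x.row then x.col else 2 * r + 1 - x.col

theorem rowOffset_lt (hx : x.col ≤ r) : rowOffset r x < 2 * (r + 1) := by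
  unfold rowOffset; split_ifs <;> omega

theorem meander_eq (hx : x.col ≤ r) :
    x.meander r q = 2 * (r + 1) * zigzag q x.row + x.rowOffset r := by
  obtain ⟨T, j, k⟩ := x
  dsimp only at hx
  simp only [meander, meanderPos, zigzag, rowOffset]
  rcases Nat.even_or_odd' k with ⟨i, rfl | rfl⟩
  · cases T <;> grind
  · have hi : (2 * i + 1) / 2 = i := by omega
    have hsub : 2 * q + 1 - (2 * i + 1) = 2 * (q - i) := by omega
    have hmul : (r + 1) * (2 * (q - i)) = 2 * (r + 1) * (q - i) := by ring
    cases T <;> simp [hi, hsub, hmul, parity_simps]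

theorem meander_lt (hx : x.InGrid r q) : x.meander r q < 2 * (r + 1) * (q + 1) := by
  have hmul := Nat.mul_le_mul_left (2 * (r + 1)) (zigzag_le hx.row_le)
  have hoff := rowOffset_lt hx.col_le
  rw [meander_eq hx.col_le, mul_add_one (2 * (r + 1)) q]
  omega

theorem meander_pos_iff (hx : x.InGrid r q) : 0 < x.meander r q ↔ x.Admissible r q := by
  refine ⟨fun h => ⟨hx, ?_⟩, fun h => ?_⟩
  · rintro ⟨hT, hj, hk⟩
    simp [meander, hT, hj, hk, meanderPos] at h
  · rw [meander_eq hx.col_le]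
    by_contra! hle
    obtain ⟨hmul, hoff⟩ := Nat.add_eq_zero_iff.1 (Nat.le_zero.1 hle)
    have hrow : x.row = 0 := (zigzag_eq_zero_iff hx.row_le).1 (by simpa using hmul)
    have hcol := hx.col_le
    simp only [rowOffset, hrow, Even.zero, iff_true] at hoff
    split_ifs at hoff with htag
    · exact h.not_star ⟨htag, hoff, hrow⟩
    · omega

theorem Admissible.meander_pos (hx : x.Admissible r q) : 0 < x.meander r q :=
  (meander_pos_iff hx.toInGrid).2 hx

theorem exists_meander_eq {m : ℕ} (hm : m < 2 * (r + 1) * (q + 1)) :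
    ∃ x : Label, x.InGrid r q ∧ x.meander r q = m := by
  obtain ⟨k, hk, hrank⟩ := exists_zigzag_eq (Nat.lt_succ_iff.1 (Nat.div_lt_of_lt_mul hm))
  obtain ⟨x, hx, rfl, hoff⟩ : ∃ x : Label, x.col ≤ r ∧ x.row = k ∧
      x.rowOffset r = m % (2 * (r + 1)) := by
    have ho := Nat.mod_lt m (show 0 < 2 * (r + 1) by omega)
    generalize m % (2 * (r + 1)) = o at ho
    rcases Nat.lt_or_ge r o with h | h
    · exact ⟨⟨if Even k then Tag.B else Tag.A, 2 * r + 1 - o, k⟩, by grind, rfl,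
        by grind [rowOffset]⟩
    · exact ⟨⟨if Even k then Tag.A else Tag.B, o, k⟩, h, rfl, by grind [rowOffset]⟩
  exact ⟨x, ⟨hx, hk⟩, by rw [meander_eq hx, hrank, hoff, Nat.div_add_mod]⟩

theorem eq_of_meander_eq_one (hx : x.InGrid r q) (h : x.meander r q = 1) :
    x = ⟨Tag.A, 1, 0⟩ ∨ r = 0 ∧ x = ⟨Tag.B, 0, 0⟩ := by
  rw [meander_eq hx.col_le] at h
  have hrow : zigzag q x.row = 0 := by
    by_contra h0
    have := Nat.le_mul_of_pos_right (2 * (r + 1)) (Nat.pos_of_ne_zero h0)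
    omega
  rw [hrow] at h
  rw [zigzag_eq_zero_iff hx.row_le] at hrow
  have hcol := hx.col_le
  obtain ⟨T, j, k⟩ := x
  cases T <;> grind [rowOffset]

theorem axis_add_meander_transpose (hx : x.InGrid r q) :
    x.axis r q + x.transpose.meander q r = 2 * (r + 1) * (q + 1) := by
  obtain ⟨T, j, k⟩ := x
  obtain ⟨d, rfl⟩ := Nat.exists_eq_add_of_le hx.col_le
  obtain ⟨e, rfl⟩ := Nat.exists_eq_add_of_le hx.row_le
  simp only [axis, meander, axisPos, meanderPos, transpose]
  have h₁ : 2 * (j + d) + 1 - j = j + 2 * d + 1 := by omega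
  have h₂ : 2 * (j + d) - j = j + 2 * d := by omega
  have h₃ : 2 * (k + e) + 1 - k = k + 2 * e + 1 := by omega
  rcases Nat.even_or_odd j with hj | hj
  · rw [← Nat.not_odd_iff_even] at hj
    cases T <;> simp only [hj, if_false, h₁, h₂, Nat.add_sub_cancel_left] <;> ring
  · obtain ⟨i, rfl⟩ : ∃ i, j = i + 1 := ⟨j - 1, by have := hj.pos; omega⟩
    cases T <;>
      simp only [hj, if_true, h₁, h₃, Nat.add_sub_cancel, Nat.add_sub_cancel_left] <;> ring

theorem rowOffset_transpose_cases (hx : x.InGrid r q) :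
    (x.rowOffset r = 2 * zigzag r x.col ∧ x.transpose.rowOffset q = 2 * zigzag q x.row) ∨
      (x.rowOffset r = 2 * (r - zigzag r x.col) + 1 ∧
        x.transpose.rowOffset q = 2 * (q - zigzag q x.row) + 1) := by
  obtain ⟨T, j, k⟩ := x
  obtain ⟨hj, hk⟩ := hx
  dsimp only at hj hk
  simp only [rowOffset, transpose]
  rcases Nat.even_or_odd' j with ⟨i, rfl | rfl⟩ <;>
    rcases Nat.even_or_odd' k with ⟨l, rfl | rfl⟩ <;>
    cases T <;> grind [zigzag_two_mul, zigzag_two_mul_add_one]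

theorem exists_meander_eq_and_axis_eq (hx : x.InGrid r q) :
    ∃ a ≤ r, ∃ b ≤ q,
      (x.meander r q = 2 * (a + (r + 1) * b) ∧
        x.axis r q = 2 * ((q + 1) * (r - a) + (q - b) + 1)) ∨
      (x.meander r q = 2 * (a + (r + 1) * b) + 1 ∧ x.axis r q = 2 * ((q + 1) * a + b) + 1) := by
  have haxis := axis_add_meander_transpose hx
  have hcases := rowOffset_transpose_cases hx
  have ha := zigzag_le hx.col_le
  have hb := zigzag_le hx.row_le
  rw [meander_eq hx.row_le] at haxis
  rw [meander_eq hx.col_le]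
  change x.axis r q + (2 * (q + 1) * zigzag r x.col + _) = _ at haxis
  generalize zigzag r x.col = a, zigzag q x.row = b at *
  obtain ⟨c, rfl⟩ := Nat.exists_eq_add_of_le ha
  obtain ⟨d, rfl⟩ := Nat.exists_eq_add_of_le hb
  simp only [Nat.add_sub_cancel_left] at hcases
  rcases hcases with ⟨hoff, hoff'⟩ | ⟨hoff, hoff'⟩ <;> rw [hoff'] at haxis <;> rw [hoff]
  · refine ⟨a, ha, b, hb, Or.inl ⟨by ring, ?_⟩⟩
    rw [Nat.add_sub_cancel_left, Nat.add_sub_cancel_left]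
    linarith
  · exact ⟨c, Nat.le_add_left c a, b, hb, Or.inr ⟨by ring, by linarith⟩⟩

/-- The order in which the meander visits labels when it starts in an even row: by row, and within a
row `A^0, …, A^r, B^r, …, B^0`. -/
def RowLt (x z : Label) : Prop :=
  x.row < z.row ∨ x.row = z.row ∧
    match x.tag, z.tag with
    | Tag.A, Tag.A => x.col < z.col
    | Tag.A, Tag.B => True
    | Tag.B, Tag.A => False
    | Tag.B, Tag.B => z.col < x.col

instance : DecidableRel RowLt := fun ⟨T, _, _⟩ ⟨U, _, _⟩ => by
  cases T <;> cases U <;> unfold RowLt <;> infer_instance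

theorem rowLt_iff_not_rowLt (h : x ≠ z) : z.RowLt x ↔ ¬ x.RowLt z := by
  obtain ⟨T, j, k⟩ := x
  obtain ⟨U, a, b⟩ := z
  cases T <;> cases U <;> grind [RowLt]

theorem rowOffset_lt_iff (hx : x.col ≤ r) (hz : z.col ≤ r) (hrow : x.row = z.row) :
    x.rowOffset r < z.rowOffset r ↔ if Even x.row then x.RowLt z else z.RowLt x := by
  obtain ⟨T, j, k⟩ := x
  obtain ⟨U, a, b⟩ := z
  cases T <;> cases U <;> grind [rowOffset, RowLt]

theorem meander_lt_iff (hx : x.InGrid r q) (hz : z.InGrid r q) :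
    x.meander r q < z.meander r q ↔
      if Even (min x.row z.row) then x.RowLt z else z.RowLt x := by
  have hoff := rowOffset_lt hx.col_le
  have hoff' := rowOffset_lt hz.col_le
  rw [meander_eq hx.col_le, meander_eq hz.col_le, mul_add_lt_mul_add_iff hoff hoff',
    zigzag_lt_iff hx.row_le hz.row_le, zigzag_inj hx.row_le hz.row_le]
  rcases eq_or_ne x.row z.row with h | h
  · simp [h, rowOffset_lt_iff hx.col_le hz.col_le h]
  · simp [h, h.symm, RowLt]

theorem meander_inj (hx : x.InGrid r q) (hz : z.InGrid r q) :
    x.meander r q = z.meander r q ↔ x = z := by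
  refine ⟨fun h => ?_, fun h => h ▸ rfl⟩
  by_contra hne
  have hxz := meander_lt_iff hx hz
  have hzx := meander_lt_iff hz hx
  have htotal := rowLt_iff_not_rowLt hne
  grind

theorem axis_lt_iff (hx : x.InGrid r q) (hz : z.InGrid r q) :
    x.axis r q < z.axis r q ↔ if Even (min x.col z.col) then z.transpose.RowLt x.transpose
      else x.transpose.RowLt z.transpose := by
  have hxr := axis_add_meander_transpose hx
  have hzr := axis_add_meander_transpose hz
  have h := meander_lt_iff hz.transpose hx.transpose
  rw [min_comm] at h
  exact Iff.trans (by omega) h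

/-- The sign of the difference of the axis positions of two distinct labels. -/
def axisSign (x z : Label) : ℤ :=
  (-1) ^ min x.col z.col * if x.transpose.RowLt z.transpose then 1 else -1

theorem sign_axis_sub_axis (hx : x.InGrid r q) (hz : z.InGrid r q) (hne : x ≠ z) :
    Int.sign ((x.axis r q : ℤ) - z.axis r q) = axisSign x z := by
  have hxz := axis_lt_iff hx hz
  have hzx := axis_lt_iff hz hx
  rw [min_comm z.col] at hzx
  rw [rowLt_iff_not_rowLt (transpose_injective.ne hne)] at hxz hzx
  have hpos : 0 < (x.axis r q : ℤ) - z.axis r q ↔ z.axis r q < x.axis r q := by omega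
  have hneg : (x.axis r q : ℤ) - z.axis r q < 0 ↔ x.axis r q < z.axis r q := by omega
  grind [axisSign, neg_one_pow_eq_ite, Int.sign_eq_one_iff_pos, Int.sign_eq_neg_one_iff_neg]

theorem axisSign_comm (h : x ≠ z) : x.axisSign z = -z.axisSign x := by
  simp only [axisSign, min_comm x.col, rowLt_iff_not_rowLt (transpose_injective.ne h)]
  split_ifs <;> simp

theorem axisSign_of_col_lt (h : x.col < z.col) : x.axisSign z = (-1) ^ x.col := by
  simp [axisSign, RowLt, transpose, h, h.le]

theorem axisSign_of_col_gt (h : z.col < x.col) : x.axisSign z = -(-1) ^ z.col := by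
  simp [axisSign, RowLt, transpose, h.le, h.ne', h.not_gt]

/-- The Morse number of a label, see `SigmaRQ.morse_meander`. -/
def morseNumber (x : Label) : ℤ :=
  match x.tag with
  | Tag.A => x.col + x.row - 1
  | Tag.B => x.col + x.row

/-- The correction which the tag of `x` contributes to the zero number of `x` and `z`. -/
def excess (x z : Label) : ℤ :=
  match x.tag with
  | Tag.A => if x.col ≤ z.col ∧ x.row ≤ z.row then -1 else 0
  | Tag.B => if x.col < z.col ∧ x.row < z.row then 1 else 0

/-- The zero number of two distinct labels, see `SigmaRQ.zfun_meander`. -/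
def zeroNumber (x z : Label) : ℤ :=
  (min x.col z.col + min x.row z.row : ℕ) + x.excess z + z.excess x

theorem zeroNumber_comm (x z : Label) : x.zeroNumber z = z.zeroNumber x := by
  simp only [zeroNumber, min_comm x.col, min_comm x.row]; ring

/-- The pairs of consecutive labels along the meander, each in one orientation only: the meander
traverses some links backwards. The index is congruent modulo 2 to the later of the two meander
positions. -/
inductive Link (r q : ℕ) : ℕ → Label → Label → Prop
  | alongRow (T : Tag) {j : ℕ} (k : ℕ) (hj : j < r) : Link r q (j + 1) ⟨T, j, k⟩ ⟨T, j + 1, k⟩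
  | turn (k : ℕ) : Link r q (r + 1) ⟨Tag.A, r, k⟩ ⟨Tag.B, r, k⟩
  | ascend {k : ℕ} (hk : k + 2 ≤ q) : Link r q 0 ⟨Tag.B, 0, k⟩ ⟨Tag.A, 0, k + 2⟩
  | summit {k : ℕ} (hk : k + 1 = q) : Link r q 0 ⟨Tag.B, 0, k⟩ ⟨Tag.B, 0, k + 1⟩

theorem Link.morseNumber_sub {p : ℕ} (h : Link r q p x y) :
    y.morseNumber - x.morseNumber = (-1) ^ p * y.axisSign x := by
  cases h with
  | alongRow T k hj =>
    cases T <;> simp [morseNumber, axisSign, RowLt, transpose, pow_succ, ← mul_pow]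
  | turn k => simp [morseNumber, axisSign, RowLt, transpose, pow_succ, ← mul_pow]
  | ascend hk => grind [morseNumber, axisSign, RowLt, transpose]
  | summit hk => simp [morseNumber, axisSign, RowLt, transpose]

theorem Link.zeroNumber_eq_min {p : ℕ} (h : Link r q p x y) :
    x.zeroNumber y = min x.morseNumber y.morseNumber := by
  cases h with
  | alongRow T k hj => cases T <;> grind [morseNumber, zeroNumber, excess]
  | turn k => grind [morseNumber, zeroNumber, excess]
  | ascend hk => simp [morseNumber, zeroNumber, excess]
  | summit hk => simp [morseNumber, zeroNumber, excess]

-- If the column of `z` differs from those of `x` and `y`, then both sides vanish.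
theorem Link.zeroNumber_sub {p : ℕ} (h : Link r q p x y) (hz : z.InGrid r q) (hx : z ≠ x)
    (hy : z ≠ y) :
    2 * (y.zeroNumber z - x.zeroNumber z) = (-1) ^ p * (y.axisSign z - x.axisSign z) := by
  obtain ⟨hcol, hrow⟩ := hz
  obtain ⟨U, a, b⟩ := z
  dsimp only at hcol hrow
  cases h with
  | @alongRow T j k hj =>
    have hs := neg_one_pow_eq_or ℤ j
    obtain ha | rfl | rfl | ha : a < j ∨ a = j ∨ a = j + 1 ∨ j + 1 < a := by omega
    · rw [axisSign_of_col_gt (Nat.lt_succ_of_lt ha), axisSign_of_col_gt ha]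
      cases T <;> cases U <;> grind [zeroNumber, excess]
    · rcases hs with hs | hs <;> cases T <;> cases U <;>
        grind [zeroNumber, excess, axisSign, RowLt, transpose]
    · rcases hs with hs | hs <;> cases T <;> cases U <;>
        grind [zeroNumber, excess, axisSign, RowLt, transpose]
    · rw [axisSign_of_col_lt ha, axisSign_of_col_lt (Nat.lt_of_succ_lt ha)]
      rcases hs with hs | hs <;> cases T <;> cases U <;> grind [zeroNumber, excess]
  | turn k =>
    rcases eq_or_lt_of_le hcol with rfl | ha
    · rcases neg_one_pow_eq_or ℤ a with hs | hs <;> cases U <;>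
        grind [zeroNumber, excess, axisSign, RowLt, transpose]
    · rw [axisSign_of_col_gt ha, axisSign_of_col_gt ha]
      cases U <;> grind [zeroNumber, excess]
  | ascend hk =>
    rcases Nat.eq_zero_or_pos a with rfl | ha
    · cases U <;> grind [zeroNumber, excess, axisSign, RowLt, transpose]
    · rw [axisSign_of_col_lt ha, axisSign_of_col_lt ha]
      cases U <;> grind [zeroNumber, excess]
  | summit hk =>
    rcases Nat.eq_zero_or_pos a with rfl | ha
    · cases U <;> grind [zeroNumber, excess, axisSign, RowLt, transpose]
    · rw [axisSign_of_col_lt ha, axisSign_of_col_lt ha]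
      cases U <;> grind [zeroNumber, excess]

theorem exists_link_of_rowOffset_pos (hy : y.col ≤ r) (hpos : 0 < y.rowOffset r) :
    ∃ x p, (Link r q p x y ∨ Link r q p y x) ∧ x.col ≤ r ∧ x.row = y.row ∧
      y.rowOffset r = x.rowOffset r + 1 ∧ (Even (y.rowOffset r) ↔ Even p) := by
  obtain ⟨T, j, k⟩ := y
  dsimp only at hy
  by_cases hT : T = Tag.A ↔ Even k
  · simp only [rowOffset, hT, if_true] at hpos
    obtain ⟨i, rfl⟩ := Nat.exists_eq_add_of_lt hpos
    exact ⟨⟨T, 0 + i, k⟩, _, Or.inl (.alongRow T k hy), by dsimp only; omega, rfl,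
      by grind [rowOffset], by grind [rowOffset]⟩
  rcases eq_or_lt_of_le hy with rfl | hj
  · cases T
    · exact ⟨⟨Tag.B, j, k⟩, _, Or.inr (.turn k), le_rfl, rfl, by grind [rowOffset],
        by grind [rowOffset]⟩
    · exact ⟨⟨Tag.A, j, k⟩, _, Or.inl (.turn k), le_rfl, rfl, by grind [rowOffset],
        by grind [rowOffset]⟩
  · exact ⟨⟨T, j + 1, k⟩, _, Or.inr (.alongRow T k hj), hj, rfl,
      by grind [rowOffset], by grind [rowOffset]⟩

theorem exists_link_of_rowOffset_eq_zero (hy : y.InGrid r q) (hzero : y.rowOffset r = 0)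
    (hrow : y.row ≠ 0) :
    ∃ x, (Link r q 0 x y ∨ Link r q 0 y x) ∧ x.col = 0 ∧ x.row ≤ q ∧
      zigzag q y.row = zigzag q x.row + 1 ∧ x.rowOffset r = 2 * r + 1 := by
  obtain ⟨hj, hk⟩ := hy
  obtain ⟨T, j, k⟩ := y
  dsimp only at hj hk hrow
  obtain ⟨hT, rfl⟩ : (T = Tag.A ↔ Even k) ∧ j = 0 := by grind [rowOffset]
  rcases Nat.even_or_odd k with heven | hodd
  · obtain rfl : T = Tag.A := hT.2 heven
    obtain ⟨i, rfl⟩ : ∃ i, k = i + 2 := ⟨k - 2, by grind⟩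
    exact ⟨⟨Tag.B, 0, i⟩, Or.inl (.ascend hk), rfl, by dsimp only; omega,
      by grind [zigzag], by grind [rowOffset]⟩
  · obtain rfl : T = Tag.B := by cases T <;> grind
    rcases lt_trichotomy (k + 1) q with hkq | hkq | hkq
    · exact ⟨⟨Tag.A, 0, k + 2⟩, Or.inr (.ascend hkq), rfl, hkq,
        by grind [zigzag], by grind [rowOffset]⟩
    · exact ⟨⟨Tag.B, 0, k + 1⟩, Or.inr (.summit hkq), rfl, hkq.le,
        by grind [zigzag], by grind [rowOffset]⟩
    · obtain ⟨i, rfl⟩ : ∃ i, k = i + 1 := ⟨k - 1, by grind⟩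
      exact ⟨⟨Tag.B, 0, i⟩, Or.inl (.summit (by omega)), rfl, by dsimp only; omega,
        by grind [zigzag], by grind [rowOffset]⟩

theorem exists_link_pred (hy : y.InGrid r q) (hpos : 0 < y.meander r q) :
    ∃ x p, (Link r q p x y ∨ Link r q p y x) ∧ x.InGrid r q ∧
      y.meander r q = x.meander r q + 1 ∧ (Even (y.meander r q) ↔ Even p) := by
  have heven (i : ℕ) : Even (2 * (r + 1) * i) := (even_two_mul _).mul_right i
  have hyc := hy.col_le
  rcases Nat.eq_zero_or_pos (y.rowOffset r) with h0 | h0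
  · have hrow : y.row ≠ 0 := fun h => by simp [meander_eq hyc, h0, h, zigzag] at hpos
    obtain ⟨x, hlink, hx, hx', hrank, hoff⟩ := exists_link_of_rowOffset_eq_zero hy h0 hrow
    have hxc : x.col ≤ r := hx.le.trans (Nat.zero_le r)
    refine ⟨x, 0, hlink, ⟨hxc, hx'⟩, ?_, by simp [meander_eq hyc, h0, heven]⟩
    rw [meander_eq hyc, meander_eq hxc, h0, hoff, hrank]
    ring
  · obtain ⟨x, p, hlink, hx, hrow, hoff, hp⟩ := exists_link_of_rowOffset_pos hyc h0
    refine ⟨x, p, hlink, ⟨hx, hrow ▸ hy.row_le⟩, ?_, by simp [meander_eq hyc, parity_simps, hp]⟩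
    rw [meander_eq hyc, meander_eq hx, hoff, hrow, add_assoc]

theorem Admissible.exists_pred (hy : y.Admissible r q) (h : 1 < y.meander r q) :
    ∃ x : Label, x.Admissible r q ∧ y.meander r q = x.meander r q + 1 ∧
      y.morseNumber - x.morseNumber = (-1) ^ y.meander r q * y.axisSign x ∧
      x.zeroNumber y = min x.morseNumber y.morseNumber ∧
      ∀ z : Label, z.InGrid r q → z ≠ x → z ≠ y →
        2 * (y.zeroNumber z - x.zeroNumber z) =
          (-1) ^ y.meander r q * (y.axisSign z - x.axisSign z) := by
  obtain ⟨x, p, hlink, hx, hm, hp⟩ := exists_link_pred hy.toInGrid hy.meander_pos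
  have hne : x ≠ y := by rintro rfl; omega
  refine ⟨x, (meander_pos_iff hx).1 (by omega), hm, ?_⟩
  rw [neg_one_pow_congr hp]
  rcases hlink with hlink | hlink
  · exact ⟨hlink.morseNumber_sub, hlink.zeroNumber_eq_min,
      fun z hz hzx hzy => hlink.zeroNumber_sub hz hzx hzy⟩
  · refine ⟨?_, ?_, fun z hz hzx hzy => ?_⟩
    · linear_combination -hlink.morseNumber_sub - (-1) ^ p * axisSign_comm hne
    · rw [zeroNumber_comm, hlink.zeroNumber_eq_min, min_comm]
    · linear_combination -hlink.zeroNumber_sub hz hzy hzx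

theorem morseNumber_of_meander_eq_one (hx : x.InGrid r q) (h : x.meander r q = 1) :
    x.morseNumber = 0 := by
  rcases eq_of_meander_eq_one hx h with rfl | ⟨-, rfl⟩ <;> simp [morseNumber]

theorem zeroNumber_of_meander_eq_one (hx : x.InGrid r q) (h : x.meander r q = 1)
    (hz : z.Admissible r q) (hne : x ≠ z) : x.zeroNumber z = 0 := by
  have hcol := hz.col_le
  have hstar := hz.not_star
  obtain ⟨U, a, b⟩ := z
  rcases eq_of_meander_eq_one hx h with rfl | ⟨rfl, rfl⟩ <;> cases U <;>
    grind [zeroNumber, excess, IsStar]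

/-- `w` lies strictly between `x` and `y` along the meander. -/
def Between (r q : ℕ) (w x y : Label) : Prop :=
  x.meander r q < w.meander r q ∧ w.meander r q < y.meander r q ∨
    y.meander r q < w.meander r q ∧ w.meander r q < x.meander r q

theorem between_iff (hx : x.InGrid r q) (hy : y.InGrid r q) (hw : w.InGrid r q) :
    w.Between r q x y ↔
      (if Even (min x.row w.row) then x.RowLt w else w.RowLt x) ∧
        (if Even (min w.row y.row) then w.RowLt y else y.RowLt w) ∨
      (if Even (min y.row w.row) then y.RowLt w else w.RowLt y) ∧
        (if Even (min w.row x.row) then w.RowLt x else x.RowLt w) := by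
  rw [Between, meander_lt_iff hx hw, meander_lt_iff hw hy, meander_lt_iff hy hw,
    meander_lt_iff hw hx]

theorem Between.of_row_eq (h : w.Between r q x y) (hx : x.InGrid r q) (hy : y.InGrid r q)
    (hw : w.InGrid r q) (hrow : x.row = y.row) :
    w.row = y.row ∧ (x.RowLt w ∧ w.RowLt y ∨ y.RowLt w ∧ w.RowLt x) := by
  rw [between_iff hx hy hw] at h
  grind [RowLt]

theorem Between.of_row_eq_succ (h : w.Between r q x y) (hx : x.InGrid r q) (hy : y.InGrid r q)
    (hw : w.InGrid r q) (hrow : x.row = y.row + 1) :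
    w.row = y.row ∧ y.RowLt w ∨ x.RowLt w := by
  rw [between_iff hx hy hw] at h
  grind [RowLt]

theorem Between.of_row_eq_add_two (h : w.Between r q x y) (hx : x.InGrid r q)
    (hy : y.InGrid r q) (hw : w.InGrid r q) (hrow : x.row = y.row + 2) :
    w.row = y.row ∧ y.RowLt w ∨ w.row = x.row ∧ w.RowLt x := by
  rw [between_iff hx hy hw] at h
  grind [RowLt]

/-- The label `w` blocks connections between `x` and `y`: it lies between them along the meander and
the three zero numbers agree. -/
structure Blocks (r q : ℕ) (w x y : Label) : Prop where
  admissible : w.Admissible r q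
  between : w.Between r q x y
  zeroNumber_left : x.zeroNumber w = w.zeroNumber y
  zeroNumber_right : w.zeroNumber y = x.zeroNumber y

theorem Blocks.symm (h : w.Blocks r q x y) : w.Blocks r q y x where
  admissible := h.admissible
  between := h.between.symm
  zeroNumber_left := by
    rw [zeroNumber_comm y w, zeroNumber_comm w x, h.zeroNumber_left]
  zeroNumber_right := by
    rw [zeroNumber_comm w x, zeroNumber_comm y x, h.zeroNumber_left, h.zeroNumber_right]

theorem blocks_of_crossing (hx : x.InGrid r q) (hy : y.InGrid r q) (hcol : x.col < y.col)
    (hrow : y.row < x.row) : (⟨Tag.B, x.col, y.row⟩ : Label).Blocks r q x y := by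
  have hw : InGrid r q ⟨Tag.B, x.col, y.row⟩ := ⟨hx.col_le, hy.row_le⟩
  refine ⟨⟨hw, by simp [IsStar]⟩, ?_, ?_, ?_⟩
  · rw [between_iff hx hy hw]
    grind [RowLt]
  · grind [zeroNumber, excess]
  · grind [zeroNumber, excess]

theorem blocks_of_diagonal {j k : ℕ} (hx : InGrid r q ⟨Tag.A, j + 1, k + 1⟩) :
    Blocks r q ⟨Tag.B, j + 1, k + 1⟩ ⟨Tag.A, j + 1, k + 1⟩ ⟨Tag.B, j, k⟩ := by
  have hw : InGrid r q ⟨Tag.B, j + 1, k + 1⟩ := ⟨hx.col_le, hx.row_le⟩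
  refine ⟨⟨hw, by simp [IsStar]⟩, ?_, ?_, ?_⟩
  · rw [between_iff hx ⟨Nat.le_of_succ_le hx.col_le, Nat.le_of_succ_le hx.row_le⟩ hw]
    grind [RowLt]
  · grind [zeroNumber, excess]
  · grind [zeroNumber, excess]

/-- The edges of the two Chafee–Infante stack decompositions. -/
def StackEdge (r q : ℕ) (x y : Label) : Prop := EdgeSpec r q x.tag x.col x.row y.tag y.col y.row

theorem StackEdge.morseNumber_eq (h : x.StackEdge r q y) :
    x.morseNumber = y.morseNumber + 1 := by
  obtain ⟨T, j, k⟩ := x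
  obtain ⟨U, a, b⟩ := y
  cases T <;> cases U <;> grind [StackEdge, EdgeSpec, morseNumber]

theorem stackEdge_or_crossing_or_diagonal (hx : x.InGrid r q)
    (hmorse : x.morseNumber = y.morseNumber + 1) :
    x.StackEdge r q y ∨ (x.col < y.col ∧ y.row < x.row) ∨ (y.col < x.col ∧ x.row < y.row) ∨
      ∃ j k, x = ⟨Tag.A, j + 1, k + 1⟩ ∧ y = ⟨Tag.B, j, k⟩ := by
  obtain ⟨hcol, hrow⟩ := hx
  obtain ⟨T, j, k⟩ := x
  obtain ⟨U, a, b⟩ := y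
  cases T <;> cases U <;> grind [StackEdge, EdgeSpec, morseNumber]

theorem exists_blocks_of_not_stackEdge (hx : x.InGrid r q) (hy : y.InGrid r q)
    (hmorse : x.morseNumber = y.morseNumber + 1) (h : ¬ x.StackEdge r q y) :
    ∃ w : Label, w.Blocks r q x y := by
  obtain hedge | ⟨hcol, hrow⟩ | ⟨hcol, hrow⟩ | ⟨j, k, rfl, rfl⟩ :=
    stackEdge_or_crossing_or_diagonal hx hmorse
  · exact absurd hedge h
  · exact ⟨_, blocks_of_crossing hx hy hcol hrow⟩
  · exact ⟨_, (blocks_of_crossing hy hx hcol hrow).symm⟩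
  · exact ⟨_, blocks_of_diagonal hx⟩

theorem StackEdge.not_blocks (h : x.StackEdge r q y) (hx : x.InGrid r q) (hy : y.InGrid r q) :
    ¬ w.Blocks r q x y := by
  rintro ⟨⟨hw, -⟩, hbetween, hleft, hright⟩
  obtain hrow | hrow | hrow : x.row = y.row ∨ x.row = y.row + 1 ∨ x.row = y.row + 2 := by
    grind [StackEdge, EdgeSpec]
  · have hpos := hbetween.of_row_eq hx hy hw hrow
    obtain ⟨T, j, k⟩ := x; obtain ⟨U, a, b⟩ := y; obtain ⟨V, c, d⟩ := w
    cases T <;> cases U <;> cases V <;> grind [StackEdge, EdgeSpec, RowLt, zeroNumber, excess]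
  · have hpos := hbetween.of_row_eq_succ hx hy hw hrow
    obtain ⟨T, j, k⟩ := x; obtain ⟨U, a, b⟩ := y; obtain ⟨V, c, d⟩ := w
    cases T <;> cases U <;> cases V <;> grind [StackEdge, EdgeSpec, RowLt, zeroNumber, excess]
  · have hpos := hbetween.of_row_eq_add_two hx hy hw hrow
    obtain ⟨T, j, k⟩ := x; obtain ⟨U, a, b⟩ := y; obtain ⟨V, c, d⟩ := w
    cases T <;> cases U <;> cases V <;> grind [StackEdge, EdgeSpec, RowLt, zeroNumber, excess]

end Label

namespace SigmaRQ

open Label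

variable {r q : ℕ} {σ : Equiv.Perm ℕ} {x y z : Label}

theorem apply_axis (hσ : SigmaRQ r q σ) (hx : x.Admissible r q) :
    σ (x.axis r q) = x.meander r q := by
  have hpos := hx.meander_pos
  obtain ⟨a, ha, b, hb, ⟨hm, haxis⟩ | ⟨hm, haxis⟩⟩ := exists_meander_eq_and_axis_eq hx.toInGrid
  · rw [hm, haxis]
    refine hσ.2.2 a b ha hb ?_
    rintro ⟨rfl, rfl⟩
    omega
  · rw [hm, haxis]
    exact hσ.2.1 a b ha hb

theorem symm_apply_meander (hσ : SigmaRQ r q σ) (hx : x.Admissible r q) :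
    σ.symm (x.meander r q) = x.axis r q := by
  rw [Equiv.symm_apply_eq, hσ.apply_axis hx]

theorem morse_meander (hσ : SigmaRQ r q σ) (hx : x.Admissible r q) :
    morse σ (x.meander r q) = x.morseNumber := by
  induction hm : x.meander r q using Nat.strong_induction_on generalizing x with
  | _ m ih =>
  subst hm
  rcases (Nat.succ_le_of_lt hx.meander_pos).eq_or_lt with h1 | h1
  · rw [← h1, Nat.succ_eq_add_one, morse, morseNumber_of_meander_eq_one hx.toInGrid h1.symm]
  · obtain ⟨y, hy, hxy, hmorse, -⟩ := hx.exists_pred h1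
    obtain ⟨m, hm⟩ : ∃ m, y.meander r q = m + 1 := Nat.exists_eq_add_one.2 hy.meander_pos
    have hne : x ≠ y := by rintro rfl; omega
    rw [hm] at hxy
    rw [hxy, morse, ← hxy, ← hm, ih _ (by omega) hy rfl, hσ.symm_apply_meander hx,
      hσ.symm_apply_meander hy, sign_axis_sub_axis hx.toInGrid hy.toInGrid hne, ← hmorse]
    ring

theorem zfun_meander (hσ : SigmaRQ r q σ) (hx : x.Admissible r q) (hz : z.Admissible r q)
    (hne : x ≠ z) : zfun σ (x.meander r q) (z.meander r q) = x.zeroNumber z := by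
  induction hm : x.meander r q using Nat.strong_induction_on generalizing x with
  | _ m ih =>
  subst hm
  rcases (Nat.succ_le_of_lt hx.meander_pos).eq_or_lt with h1 | h1
  · rw [← h1, Nat.succ_eq_add_one, zfun, zrec]
    exact (zeroNumber_of_meander_eq_one hx.toInGrid h1.symm hz hne).symm
  · obtain ⟨y, hy, hxy, -, hmin, hzero⟩ := hx.exists_pred h1
    obtain ⟨m, hm⟩ : ∃ m, y.meander r q = m + 1 := Nat.exists_eq_add_one.2 hy.meander_pos
    have hxz : x.meander r q ≠ z.meander r q := (meander_inj hx.toInGrid hz.toInGrid).not.2 hne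
    rw [hm] at hxy
    rw [zfun, hxy, zrec, ← hxy, ← hm, if_neg hxz]
    rcases eq_or_ne y z with rfl | hyz
    · rw [if_pos rfl, hm, ← hxy, ← hm, hσ.morse_meander hx, hσ.morse_meander hy,
        zeroNumber_comm, hmin]
    · have hyz' : y.meander r q ≠ z.meander r q :=
        (meander_inj hy.toInGrid hz.toInGrid).not.2 hyz
      rw [if_neg hyz', ← zfun, ih _ (by omega) hy hyz rfl, hσ.symm_apply_meander hx,
        hσ.symm_apply_meander hy, hσ.symm_apply_meander hz,
        sign_axis_sub_axis hx.toInGrid hz.toInGrid hne,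
        sign_axis_sub_axis hy.toInGrid hz.toInGrid hyz,
        ← hzero z hz.toInGrid hyz.symm hne.symm, Int.mul_ediv_cancel_left _ two_ne_zero]
      ring

theorem hasEdge_meander_iff_not_blocks (hσ : SigmaRQ r q σ) (hx : x.Admissible r q)
    (hy : y.Admissible r q) :
    hasEdge (2 * (r + 1) * (q + 1) - 1) σ (x.meander r q) (y.meander r q) ↔
      x.morseNumber = y.morseNumber + 1 ∧ ∀ w : Label, ¬ w.Blocks r q x y := by
  have hxlt := meander_lt hx.toInGrid
  have hylt := meander_lt hy.toInGrid
  have hxpos := hx.meander_pos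
  have hypos := hy.meander_pos
  rw [hasEdge, hσ.morse_meander hx, hσ.morse_meander hy, ← not_exists]
  simp only [show 1 ≤ x.meander r q by omega, show 1 ≤ y.meander r q by omega,
    show x.meander r q ≤ 2 * (r + 1) * (q + 1) - 1 by omega,
    show y.meander r q ≤ 2 * (r + 1) * (q + 1) - 1 by omega, true_and]
  refine and_congr_right fun hmorse => not_congr ?_
  have hxy : x ≠ y := by rintro rfl; omega
  rw [hσ.zfun_meander hx hy hxy]
  constructor
  · rintro ⟨m, hmin, hmax, hleft, hright⟩
    obtain ⟨w, hgrid, rfl⟩ := exists_meander_eq (r := r) (q := q) (m := m) (by omega)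
    have hw : w.Admissible r q := (meander_pos_iff hgrid).1 (by omega)
    have hxw : x ≠ w := by rintro rfl; omega
    have hwy : w ≠ y := by rintro rfl; omega
    rw [hσ.zfun_meander hw hy hwy] at hleft hright
    rw [hσ.zfun_meander hx hw hxw] at hleft
    exact ⟨w, hw, by unfold Between; omega, hleft, hright⟩
  · rintro ⟨w, hw, hbetween, hleft, hright⟩
    unfold Between at hbetween
    have hxw : x ≠ w := by rintro rfl; omega
    have hwy : w ≠ y := by rintro rfl; omega
    refine ⟨w.meander r q, by omega, by omega, ?_⟩
    rw [hσ.zfun_meander hx hw hxw, hσ.zfun_meander hw hy hwy]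
    exact ⟨hleft, hright⟩

theorem hasEdge_meander_iff (hσ : SigmaRQ r q σ) (hx : x.Admissible r q)
    (hy : y.Admissible r q) :
    hasEdge (2 * (r + 1) * (q + 1) - 1) σ (x.meander r q) (y.meander r q) ↔
      x.StackEdge r q y := by
  rw [hσ.hasEdge_meander_iff_not_blocks hx hy]
  refine ⟨fun ⟨hmorse, hblocks⟩ => ?_,
    fun h => ⟨h.morseNumber_eq, fun w => h.not_blocks hx.toInGrid hy.toInGrid⟩⟩
  by_contra h
  obtain ⟨w, hw⟩ := exists_blocks_of_not_stackEdge hx.toInGrid hy.toInGrid hmorse h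
  exact hblocks w hw

theorem not_hasEdge_of_isStar (hσ : SigmaRQ r q σ) (h : IsStar x.tag x.col x.row) (m : ℕ) :
    ¬ hasEdge (2 * (r + 1) * (q + 1) - 1) σ (σ (x.axis r q)) m ∧
      ¬ hasEdge (2 * (r + 1) * (q + 1) - 1) σ m (σ (x.axis r q)) := by
  obtain ⟨hT, hj, hk⟩ := h
  have haxis : x.axis r q = 2 * (r + 1) * (q + 1) := by
    simp only [axis, axisPos, hT, hj, hk, Nat.not_odd_zero, if_false, Nat.sub_zero]; ring
  have hpos : 0 < 2 * (r + 1) * (q + 1) := by positivity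
  have hfix : σ (x.axis r q) = x.axis r q := hσ.1 _ (by rw [haxis, Set.mem_Icc]; omega)
  rw [hfix, haxis]
  exact ⟨fun ⟨_, h, _⟩ => by omega, fun ⟨_, _, _, h, _⟩ => by omega⟩

end SigmaRQ

/-- the connection digraph of `σ_{rq}`, transported to labels,
consists exactly of the edges of the two Chafee-Infante stack decompositions. -/
theorem stmt_9 (r q : ℕ) (hr : 1 ≤ r) (hq : 1 ≤ q) (hrq : 1 < r*q)
    (σ : Equiv.Perm ℕ) (hσ : SigmaRQ r q σ) :
    ∀ (L L' : Tag) (j k j' k' : ℕ), j ≤ r → k ≤ q → j' ≤ r → k' ≤ q →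
      (hasEdge (2*(r+1)*(q+1)-1) σ
          (σ (axisPos r q L j k)) (σ (axisPos r q L' j' k')) ↔
        (¬ IsStar L j k ∧ ¬ IsStar L' j' k' ∧ EdgeSpec r q L j k L' j' k')) := by
  intro L L' j k j' k' hj hk hj' hk'
  change hasEdge _ σ (σ (Label.axis r q ⟨L, j, k⟩)) (σ (Label.axis r q ⟨L', j', k'⟩)) ↔ _
  by_cases hstar : IsStar L j k
  · simp [hstar, hσ.not_hasEdge_of_isStar (x := ⟨L, j, k⟩) hstar]
  by_cases hstar' : IsStar L' j' k'
  · simp [hstar', hσ.not_hasEdge_of_isStar (x := ⟨L', j', k'⟩) hstar']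
  have hx : Label.Admissible r q ⟨L, j, k⟩ := ⟨⟨hj, hk⟩, hstar⟩
  have hy : Label.Admissible r q ⟨L', j', k'⟩ := ⟨⟨hj', hk'⟩, hstar'⟩
  rw [hσ.apply_axis hx, hσ.apply_axis hy, hσ.hasEdge_meander_iff hx hy]
  exact ⟨fun h => ⟨hstar, hstar', h⟩, fun h => h.2.2⟩
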